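/- arXiv:math/0107037 — 4 statements merged into one kernel-verified Lean document; each statement's English description precedes it below -/
import Mathlib

section
/- Let U ⊆ ℂⁿ be open and F : U → ℂ holomorphic with Im HF(z) invertible for every z ∈ U, and let φ_F : U → ℝ^{2n+1} be defined by φ_F(z) = (Re z, Re ∇F(z), 2 Im F(z) − 2 Σ_k Re((∇F(z))_k) · Im(z^k)). Then for every z ∈ U, the last standard basis vector e_{2n+1} of ℝ^{2n+1} is transversal to the image of the derivative: ℝ^{2n+1} is the direct sum of the range of the real Fréchet derivative Dφ_F(z) and the line ℝ·e_{2n+1}. -/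
/-!
Forgetting the last coordinate is a linear map `π` with kernel `ℝ · e_{2n+1}`, so it suffices that
`π ∘ Dφ_F(z)` is bijective. With `A = HF(z)` this composition is
`X ↦ (Re X, Re (A X)) = (Re X, Re A Re X - Im A Im X)`, which determines `Re X` and then, as `Im A`
is invertible, `Im X`.
-/

theorem isCompl_range_ker_of_bijective_comp {R M N P : Type*} [Ring R]
    [AddCommGroup M] [AddCommGroup N] [AddCommGroup P] [Module R M] [Module R N] [Module R P]
    {f : M →ₗ[R] N} {g : N →ₗ[R] P} (h : Function.Bijective (g ∘ₗ f)) :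
    IsCompl f.range g.ker := by
  constructor
  · rw [Submodule.disjoint_def]
    rintro _ ⟨x, rfl⟩ hx
    have hx0 : x = 0 := h.injective (by simpa using hx)
    rw [hx0, map_zero]
  · rw [codisjoint_iff_le_sup]
    intro y _
    obtain ⟨x, hx⟩ := h.surjective (g y)
    have hxy : y - f x ∈ g.ker := by simp [← hx]
    exact Submodule.mem_sup.2 ⟨f x, ⟨x, rfl⟩, y - f x, hxy, add_sub_cancel _ _⟩

theorem ker_id_prodMap_fst_eq_span (R M N : Type*) [Semiring R]
    [AddCommMonoid M] [AddCommMonoid N] [Module R M] [Module R N] :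
    (LinearMap.id.prodMap (LinearMap.fst R N R) : M × N × R →ₗ[R] M × N).ker =
      Submodule.span R {((0, 0, 1) : M × N × R)} := by
  ext ⟨x, y, c⟩
  simp [Submodule.mem_span_singleton, eq_comm]

/-- The coordinatewise real part `ℂ^ι → ℝ^ι` as a continuous real-linear map, which serves to write
the real derivative of `φ_F`. -/
noncomputable def rePi (ι : Type*) : (ι → ℂ) →L[ℝ] (ι → ℝ) :=
  .piMap fun _ => Complex.reCLM

section

open Matrix

variable {ι : Type*} [Fintype ι]

theorem re_mulVec {κ : Type*} (A : Matrix κ ι ℂ) (X : ι → ℂ) :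
    (fun k => ((A *ᵥ X) k).re) =
      A.map Complex.re *ᵥ (fun i => (X i).re) - A.map Complex.im *ᵥ (fun i => (X i).im) := by
  ext k
  simp [mulVec, dotProduct, Finset.sum_sub_distrib]

theorem bijective_re_prodMk_re_mulVec [DecidableEq ι] {A : Matrix ι ι ℂ}
    (hA : IsUnit (A.map Complex.im)) :
    Function.Bijective fun X : ι → ℂ => ((fun i => (X i).re), fun i => ((A *ᵥ X) i).re) := by
  simp only [re_mulVec]
  constructor
  · intro X Y hXY
    obtain ⟨hre, hre_mulVec⟩ := Prod.mk.inj hXY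
    rw [hre, sub_right_inj] at hre_mulVec
    have him : (fun i => (X i).im) = fun i => (Y i).im :=
      mulVec_injective_of_isUnit hA hre_mulVec
    exact funext fun i => Complex.ext (congrFun hre i) (congrFun him i)
  · rintro ⟨a, b⟩
    obtain ⟨y, hy⟩ := mulVec_surjective_iff_isUnit.2 hA (A.map Complex.re *ᵥ a - b)
    exact ⟨fun i => ⟨a i, y i⟩, by simp [hy]⟩

theorem differentiableAt_two_mul_im_sub_two_mul_sum {F : (ι → ℂ) → ℂ} {G : (ι → ℂ) → ι → ℂ}
    {z : ι → ℂ} (hF : DifferentiableAt ℝ F z) (hG : DifferentiableAt ℝ G z) :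
    DifferentiableAt ℝ
      (fun w => 2 * (F w).im - 2 * ∑ k, (G w k).re * (w k).im) z := by
  change DifferentiableAt ℝ (fun w => 2 * Complex.imCLM (F w)
    - 2 * ∑ k, Complex.reCLM (G w k) * Complex.imCLM (w k)) z
  fun_prop

theorem vertical_transversal_to_phiF_general [DecidableEq ι] {G : (ι → ℂ) → ι → ℂ} {z : ι → ℂ}
    {G' : (ι → ℂ) →L[ℂ] (ι → ℂ)} {A : Matrix ι ι ℂ} {h : (ι → ℂ) → ℝ}
    (hG : HasFDerivAt G G' z) (hG' : ∀ X, G' X = A *ᵥ X) (hA : IsUnit (A.map Complex.im))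
    (hh : DifferentiableAt ℝ h z) :
    ∃ L : (ι → ℂ) →L[ℝ] (ι → ℝ) × (ι → ℝ) × ℝ,
      HasFDerivAt (fun w => ((fun i => (w i).re), (fun i => (G w i).re), h w)) L z ∧
      IsCompl (LinearMap.range L.toLinearMap)
        (Submodule.span ℝ {((0, 0, 1) : (ι → ℝ) × (ι → ℝ) × ℝ)}) := by
  let reG' : (ι → ℂ) →L[ℝ] (ι → ℝ) := rePi ι ∘L G'.restrictScalars ℝ
  have hreG : HasFDerivAt (fun w i => (G w i).re) reG' z :=
    (rePi ι).hasFDerivAt.comp z (hG.restrictScalars ℝ)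
  let L := (rePi ι).prod (reG'.prod (fderiv ℝ h z))
  have hL_comp : (LinearMap.id.prodMap (LinearMap.fst ℝ (ι → ℝ) ℝ) ∘ₗ L.toLinearMap : _ → _) =
      fun X => ((fun i => (X i).re), fun i => ((A *ᵥ X) i).re) := by
    simp only [← hG']
    rfl
  refine ⟨L, (rePi ι).hasFDerivAt.prodMk (hreG.prodMk hh.hasFDerivAt), ?_⟩
  rw [← ker_id_prodMap_fst_eq_span]
  apply isCompl_range_ker_of_bijective_comp
  rw [hL_comp]
  exact bijective_re_prodMk_re_mulVec hA

end

/-- With `F` holomorphic and nondegenerate on the open set `U ⊆ ℂⁿ` and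
`φ_F(z) = (Re z, Re ∇F(z), 2 Im F(z) − 2 ∑_k Re((∇F(z))_k) Im(z^k))`, at every `z ∈ U`
the vector `e_{2n+1} = (0,0,1)` is transversal to the image of the derivative:
`ℝ^{2n+1}` is the direct sum of the range of the real Fréchet derivative `Dφ_F(z)`
and the line `ℝ · e_{2n+1}`. -/
theorem vertical_transversal_to_phiF
    {n : ℕ} (hn : 1 ≤ n) (U : Set (Fin n → ℂ)) (hU : IsOpen U)
    (F : (Fin n → ℂ) → ℂ) (gradF : (Fin n → ℂ) → (Fin n → ℂ))
    (hessF : (Fin n → ℂ) → Matrix (Fin n) (Fin n) ℂ)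
    (hF : ∀ z ∈ U, ∃ L : (Fin n → ℂ) →L[ℂ] ℂ,
      HasFDerivAt F L z ∧ ∀ X, L X = ∑ k, gradF z k * X k)
    (hgrad : ∀ z ∈ U, ∃ L : (Fin n → ℂ) →L[ℂ] (Fin n → ℂ),
      HasFDerivAt gradF L z ∧ ∀ X, L X = (hessF z).mulVec X)
    (hnondeg : ∀ z ∈ U, IsUnit ((hessF z).map Complex.im))
    (φ : (Fin n → ℂ) → (Fin n → ℝ) × (Fin n → ℝ) × ℝ)
    (hφ : ∀ z, φ z = ((fun i => (z i).re), (fun i => (gradF z i).re),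
      2 * (F z).im - 2 * ∑ k, (gradF z k).re * (z k).im)) :
    ∀ z ∈ U, ∃ L : (Fin n → ℂ) →L[ℝ] (Fin n → ℝ) × (Fin n → ℝ) × ℝ,
      HasFDerivAt φ L z ∧
      IsCompl (LinearMap.range (L.toLinearMap))
        (Submodule.span ℝ {((0, 0, 1) : (Fin n → ℝ) × (Fin n → ℝ) × ℝ)}) := by
  intro z hz
  obtain ⟨F', hF', -⟩ := hF z hz
  obtain ⟨G', hG', hG'_apply⟩ := hgrad z hz
  rw [funext hφ]
  exact vertical_transversal_to_phiF_general hG' hG'_apply (hnondeg z hz)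
    (differentiableAt_two_mul_im_sub_two_mul_sum (hF'.differentiableAt.restrictScalars ℝ)
      (hG'.differentiableAt.restrictScalars ℝ))
end

section
/- With the notation of the coordinate setup: for all indices i, j ∈ {1,…,n} and at every point of W, Σ_{k=1}^n (∂u^k/∂y_i)(∂v_k/∂y_j) = Σ_{k=1}^n (∂u^k/∂y_j)(∂v_k/∂y_i). -/
/-- Partial derivative of a real function on `ℝⁿ × ℝⁿ` in the direction of the
`i`-th coordinate of the first factor (the `x`-coordinates). -/
noncomputable def pdx {n : ℕ} (g : (Fin n → ℝ) × (Fin n → ℝ) → ℝ)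
    (i : Fin n) (p : (Fin n → ℝ) × (Fin n → ℝ)) : ℝ :=
  fderiv ℝ g p (Pi.single i 1, 0)

/-- Partial derivative of a real function on `ℝⁿ × ℝⁿ` in the direction of the
`j`-th coordinate of the second factor (the `y`-coordinates). -/
noncomputable def pdy {n : ℕ} (g : (Fin n → ℝ) × (Fin n → ℝ) → ℝ)
    (j : Fin n) (p : (Fin n → ℝ) × (Fin n → ℝ)) : ℝ :=
  fderiv ℝ g p (0, Pi.single j 1)

/-!
Since the Hessian of `F` is symmetric, the holomorphic symplectic form `∑ dz_k ∧ dw_k` vanishes on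
the graph `w = ∇F(z)`. With `z = x + iu` and `w = y + iv`, the real part of this says
`∑ dx_k ∧ dy_k = ∑ du_k ∧ dv_k`, and `dx_k` vanishes on the vectors `∂/∂y_i`.
-/

open scoped Matrix Topology

theorem dotProduct_mulVec_comm_of_isSymm {ι R : Type*} [Fintype ι] [CommSemiring R]
    {A : Matrix ι ι R} (hA : A.IsSymm) (a b : ι → R) : a ⬝ᵥ A *ᵥ b = b ⬝ᵥ A *ᵥ a := by
  rw [Matrix.dotProduct_mulVec, ← Matrix.mulVec_transpose, hA.eq, dotProduct_comm]

theorem re_dotProduct {ι : Type*} [Fintype ι] (a b : ι → ℂ) :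
    (a ⬝ᵥ b).re = ∑ k, (a k).re * (b k).re - ∑ k, (a k).im * (b k).im := by
  simp only [dotProduct, Complex.re_sum, Complex.mul_re, Finset.sum_sub_distrib]

theorem fderiv_apply_zero_prod_of_eventuallyEq_comp_fst {𝕜 E₁ E₂ F : Type*}
    [NontriviallyNormedField 𝕜] [NormedAddCommGroup E₁] [NormedSpace 𝕜 E₁]
    [NormedAddCommGroup E₂] [NormedSpace 𝕜 E₂] [NormedAddCommGroup F] [NormedSpace 𝕜 F]
    {f : E₁ × E₂ → F} {g : E₁ → F} {p : E₁ × E₂} (hfg : f =ᶠ[𝓝 p] fun q => g q.1)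
    (hg : DifferentiableAt 𝕜 g p.1) (Y : E₂) : fderiv 𝕜 f p (0, Y) = 0 := by
  rw [hfg.fderiv_eq, fderiv_fun_comp p hg differentiableAt_fst, fderiv_fst]
  exact map_zero (fderiv 𝕜 g p.1)

section

variable {ι E : Type*} [NormedAddCommGroup E] [NormedSpace ℝ E] {Ψ : E → ι → ℂ} {p : E}

theorem fderiv_re_apply (hΨ : DifferentiableAt ℝ Ψ p) (k : ι) (X : E) :
    fderiv ℝ (fun q => (Ψ q k).re) p X = (fderiv ℝ Ψ p X k).re :=
  DFunLike.congr_fun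
    (Complex.reCLM.hasFDerivAt.comp p (hasFDerivAt_pi'.1 hΨ.hasFDerivAt k)).fderiv X

theorem fderiv_im_apply (hΨ : DifferentiableAt ℝ Ψ p) (k : ι) (X : E) :
    fderiv ℝ (fun q => (Ψ q k).im) p X = (fderiv ℝ Ψ p X k).im :=
  DFunLike.congr_fun
    (Complex.imCLM.hasFDerivAt.comp p (hasFDerivAt_pi'.1 hΨ.hasFDerivAt k)).fderiv X

variable [Fintype ι] {G : (ι → ℂ) → ι → ℂ} {L : (ι → ℂ) →L[ℂ] (ι → ℂ)}

/-- The real part of `∑ dz_k ∧ dw_k = 0` on the graph of `G`, pulled back to `E`. -/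
theorem sum_fderiv_re_mul_sub_sum_fderiv_im_mul_comm (hG : HasFDerivAt G L (Ψ p))
    (hL : ∀ a b, a ⬝ᵥ L b = b ⬝ᵥ L a) (hΨ : DifferentiableAt ℝ Ψ p) (X Y : E) :
    ∑ k, fderiv ℝ (fun q => (Ψ q k).re) p X * fderiv ℝ (fun q => (G (Ψ q) k).re) p Y
        - ∑ k, fderiv ℝ (fun q => (Ψ q k).im) p X * fderiv ℝ (fun q => (G (Ψ q) k).im) p Y
      = ∑ k, fderiv ℝ (fun q => (Ψ q k).re) p Y * fderiv ℝ (fun q => (G (Ψ q) k).re) p X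
        - ∑ k, fderiv ℝ (fun q => (Ψ q k).im) p Y * fderiv ℝ (fun q => (G (Ψ q) k).im) p X := by
  have hGΨ : HasFDerivAt (fun q => G (Ψ q)) ((L.restrictScalars ℝ).comp (fderiv ℝ Ψ p)) p :=
    (hG.restrictScalars ℝ).comp p hΨ.hasFDerivAt
  have hsymm := congrArg Complex.re (hL (fderiv ℝ Ψ p X) (fderiv ℝ Ψ p Y))
  simpa only [fderiv_re_apply hΨ, fderiv_im_apply hΨ, fderiv_re_apply hGΨ.differentiableAt,
    fderiv_im_apply hGΨ.differentiableAt, hGΨ.fderiv, ContinuousLinearMap.comp_apply,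
    ContinuousLinearMap.coe_restrictScalars', re_dotProduct] using hsymm

theorem lagrangian_rel_yy_general {X Y : E} (hG : HasFDerivAt G L (Ψ p))
    (hL : ∀ a b, a ⬝ᵥ L b = b ⬝ᵥ L a) (hΨ : DifferentiableAt ℝ Ψ p)
    (hX : ∀ k, fderiv ℝ (fun q => (Ψ q k).re) p X = 0)
    (hY : ∀ k, fderiv ℝ (fun q => (Ψ q k).re) p Y = 0) :
    ∑ k, fderiv ℝ (fun q => (Ψ q k).im) p X * fderiv ℝ (fun q => (G (Ψ q) k).im) p Y
      = ∑ k, fderiv ℝ (fun q => (Ψ q k).im) p Y * fderiv ℝ (fun q => (G (Ψ q) k).im) p X := by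
  simpa only [hX, hY, zero_mul, Finset.sum_const_zero, zero_sub, neg_inj] using
    sum_fderiv_re_mul_sub_sum_fderiv_im_mul_comm hG hL hΨ X Y

end

/-- `∑_k (∂u^k/∂y_i)(∂v_k/∂y_j) = ∑_k (∂u^k/∂y_j)(∂v_k/∂y_i)` on `W`. -/
theorem lagrangian_rel_yy
    {n : ℕ} (hn : 1 ≤ n) (U : Set (Fin n → ℂ)) (hU : IsOpen U)
    (F : (Fin n → ℂ) → ℂ) (gradF : (Fin n → ℂ) → (Fin n → ℂ))
    (hessF : (Fin n → ℂ) → Matrix (Fin n) (Fin n) ℂ)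
    (hF : ∀ z ∈ U, ∃ L : (Fin n → ℂ) →L[ℂ] ℂ,
      HasFDerivAt F L z ∧ ∀ X, L X = ∑ k, gradF z k * X k)
    (hgrad : ∀ z ∈ U, ∃ L : (Fin n → ℂ) →L[ℂ] (Fin n → ℂ),
      HasFDerivAt gradF L z ∧ ∀ X, L X = (hessF z).mulVec X)
    (hsymm : ∀ z ∈ U, (hessF z).IsSymm)
    (hnondeg : ∀ z ∈ U, IsUnit ((hessF z).map Complex.im))
    (W : Set ((Fin n → ℝ) × (Fin n → ℝ))) (hW : IsOpen W)
    (Ψ : (Fin n → ℝ) × (Fin n → ℝ) → (Fin n → ℂ))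
    (hΨU : ∀ p ∈ W, Ψ p ∈ U)
    (hΨsmooth : ContDiffOn ℝ (⊤ : ℕ∞) Ψ W)
    (hΨinv : ∀ p ∈ W,
      ((fun i => (Ψ p i).re, fun i => (gradF (Ψ p) i).re) :
        (Fin n → ℝ) × (Fin n → ℝ)) = p) :
    ∀ i j : Fin n, ∀ p ∈ W,
      ∑ k, pdy (fun q => (Ψ q k).im) i p * pdy (fun q => (gradF (Ψ q) k).im) j p
        = ∑ k, pdy (fun q => (Ψ q k).im) j p * pdy (fun q => (gradF (Ψ q) k).im) i p := by
  intro i j p hp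
  have hWp : W ∈ 𝓝 p := hW.mem_nhds hp
  have hΨ : DifferentiableAt ℝ Ψ p := (hΨsmooth.contDiffAt hWp).differentiableAt (by simp)
  have hre (k : Fin n) : (fun q => (Ψ q k).re) =ᶠ[𝓝 p] fun q => q.1 k :=
    Filter.eventually_of_mem hWp fun q hq => congrFun (congrArg Prod.fst (hΨinv q hq)) k
  have hpdy (m k : Fin n) : pdy (fun q => (Ψ q k).re) m p = 0 :=
    fderiv_apply_zero_prod_of_eventuallyEq_comp_fst (g := fun x : Fin n → ℝ => x k) (hre k)
      (differentiableAt_apply k p.1) _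
  obtain ⟨L, hG, hL⟩ := hgrad (Ψ p) (hΨU p hp)
  have hLsymm : ∀ a b, a ⬝ᵥ L b = b ⬝ᵥ L a := by
    simpa only [hL] using dotProduct_mulVec_comm_of_isSymm (hsymm (Ψ p) (hΨU p hp))
  exact lagrangian_rel_yy_general hG hLsymm hΨ (hpdy i) (hpdy j)
end

section
/- With the notation of the coordinate setup: for every index j ∈ {1,…,n} and at every point (x,y) ∈ W, ∂/∂y_j ( Im F(Ψ(x,y)) ) = Σ_{k=1}^n (∂u^k/∂y_j)(x,y) · y_k. -/
/-!
Write `Ψ = x + i u` and `∇F ∘ Ψ = y + i v`. The chain rule pulls `dF = ∑ ∂ₖF dzᵏ` back to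
`d (F ∘ Ψ) = ∑ (yₖ + i vₖ) (dxᵏ + i duᵏ)`, whose imaginary part is `∑ (yₖ duᵏ + vₖ dxᵏ)`.
On `∂/∂yⱼ` every `dxᵏ` vanishes, leaving `∑ yₖ ∂uᵏ/∂yⱼ`.
-/

open scoped Topology

/-- `F` is complex differentiable at `z` with holomorphic gradient `a`, that is, `dF = ∑ aₖ dzᵏ`
at `z`. The pairing with `a` is bilinear, unlike the sesquilinear one in Mathlib's
`HasGradientAt`. -/
def HasHolomorphicGradientAt {ι : Type*} [Fintype ι] (F : (ι → ℂ) → ℂ) (a z : ι → ℂ) : Prop :=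
  ∃ L : (ι → ℂ) →L[ℂ] ℂ, HasFDerivAt F L z ∧ ∀ X, L X = ∑ k, a k * X k

section ChainRule

variable {E : Type*} [NormedAddCommGroup E] [NormedSpace ℝ E] {p : E}

theorem fderiv_re {f : E → ℂ} (hf : DifferentiableAt ℝ f p) :
    fderiv ℝ (fun q => (f q).re) p = Complex.reCLM ∘L fderiv ℝ f p :=
  (Complex.reCLM.hasFDerivAt.comp p hf.hasFDerivAt).fderiv

theorem fderiv_im {f : E → ℂ} (hf : DifferentiableAt ℝ f p) :
    fderiv ℝ (fun q => (f q).im) p = Complex.imCLM ∘L fderiv ℝ f p :=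
  (Complex.imCLM.hasFDerivAt.comp p hf.hasFDerivAt).fderiv

variable {ι : Type*} {Ψ : E → ι → ℂ}

theorem fderiv_re_coord_apply (hΨ : DifferentiableAt ℝ Ψ p) (k : ι) (v : E) :
    fderiv ℝ (fun q => (Ψ q k).re) p v = (fderiv ℝ Ψ p v k).re := by
  rw [fderiv_re (differentiableAt_pi.1 hΨ k), fderiv_apply hΨ]
  rfl

theorem fderiv_im_coord_apply (hΨ : DifferentiableAt ℝ Ψ p) (k : ι) (v : E) :
    fderiv ℝ (fun q => (Ψ q k).im) p v = (fderiv ℝ Ψ p v k).im := by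
  rw [fderiv_im (differentiableAt_pi.1 hΨ k), fderiv_apply hΨ]
  rfl

namespace HasHolomorphicGradientAt

variable [Fintype ι] {F : (ι → ℂ) → ℂ} {a : ι → ℂ}

theorem hasFDerivAt_comp (hF : HasHolomorphicGradientAt F a (Ψ p))
    (hΨ : DifferentiableAt ℝ Ψ p) :
    ∃ D : E →L[ℝ] ℂ, HasFDerivAt (fun q => F (Ψ q)) D p ∧
      ∀ v, D v = ∑ k, a k * fderiv ℝ Ψ p v k := by
  obtain ⟨L, hL, hLa⟩ := hF
  exact ⟨_, (hL.restrictScalars ℝ).comp p hΨ.hasFDerivAt, fun v => hLa (fderiv ℝ Ψ p v)⟩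

theorem fderiv_im_comp_apply (hF : HasHolomorphicGradientAt F a (Ψ p))
    (hΨ : DifferentiableAt ℝ Ψ p) (v : E) :
    fderiv ℝ (fun q => (F (Ψ q)).im) p v =
      ∑ k, ((a k).re * fderiv ℝ (fun q => (Ψ q k).im) p v +
        (a k).im * fderiv ℝ (fun q => (Ψ q k).re) p v) := by
  obtain ⟨D, hD, hDa⟩ := hF.hasFDerivAt_comp hΨ
  calc fderiv ℝ (fun q => (F (Ψ q)).im) p v
      = (D v).im := by rw [fderiv_im hD.differentiableAt, hD.fderiv]; rfl
    _ = ∑ k, (a k * fderiv ℝ Ψ p v k).im := by rw [hDa, Complex.im_sum]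
    _ = _ := by
      simp only [Complex.mul_im, fderiv_re_coord_apply hΨ, fderiv_im_coord_apply hΨ]

end HasHolomorphicGradientAt

end ChainRule

theorem pdy_eq_zero_of_eventuallyEq_fst {n : ℕ} {g : (Fin n → ℝ) × (Fin n → ℝ) → ℝ} {k : Fin n}
    {p : (Fin n → ℝ) × (Fin n → ℝ)} (hg : g =ᶠ[𝓝 p] fun q => q.1 k) (j : Fin n) :
    pdy g j p = 0 := by
  rw [pdy, hg.fderiv_eq, fderiv_apply differentiableAt_fst, fderiv_fst]
  rfl

theorem dy_imF_general {n : ℕ} {F : (Fin n → ℂ) → ℂ} {a : Fin n → ℂ}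
    {Ψ : (Fin n → ℝ) × (Fin n → ℝ) → (Fin n → ℂ)} {p : (Fin n → ℝ) × (Fin n → ℝ)}
    (hF : HasHolomorphicGradientAt F a (Ψ p)) (hΨ : DifferentiableAt ℝ Ψ p)
    (hx : ∀ k, (fun q => (Ψ q k).re) =ᶠ[𝓝 p] fun q => q.1 k)
    (hy : ∀ k, (a k).re = p.2 k) (j : Fin n) :
    pdy (fun q => (F (Ψ q)).im) j p = ∑ k, pdy (fun q => (Ψ q k).im) j p * p.2 k := by
  have hdx (k : Fin n) : pdy (fun q => (Ψ q k).re) j p = 0 :=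
    pdy_eq_zero_of_eventuallyEq_fst (hx k) j
  calc pdy (fun q => (F (Ψ q)).im) j p
      = ∑ k, ((a k).re * pdy (fun q => (Ψ q k).im) j p +
          (a k).im * pdy (fun q => (Ψ q k).re) j p) :=
        hF.fderiv_im_comp_apply hΨ _
    _ = ∑ k, pdy (fun q => (Ψ q k).im) j p * p.2 k := by
        simp only [hdx, hy, mul_zero, add_zero, mul_comm]

/-- `∂(Im F ∘ Ψ)/∂y_j = ∑_k (∂u^k/∂y_j) y_k` on `W`. -/
theorem dy_imF
    {n : ℕ} (hn : 1 ≤ n) (U : Set (Fin n → ℂ)) (hU : IsOpen U)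
    (F : (Fin n → ℂ) → ℂ) (gradF : (Fin n → ℂ) → (Fin n → ℂ))
    (hessF : (Fin n → ℂ) → Matrix (Fin n) (Fin n) ℂ)
    (hF : ∀ z ∈ U, ∃ L : (Fin n → ℂ) →L[ℂ] ℂ,
      HasFDerivAt F L z ∧ ∀ X, L X = ∑ k, gradF z k * X k)
    (hgrad : ∀ z ∈ U, ∃ L : (Fin n → ℂ) →L[ℂ] (Fin n → ℂ),
      HasFDerivAt gradF L z ∧ ∀ X, L X = (hessF z).mulVec X)
    (hsymm : ∀ z ∈ U, (hessF z).IsSymm)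
    (hnondeg : ∀ z ∈ U, IsUnit ((hessF z).map Complex.im))
    (W : Set ((Fin n → ℝ) × (Fin n → ℝ))) (hW : IsOpen W)
    (Ψ : (Fin n → ℝ) × (Fin n → ℝ) → (Fin n → ℂ))
    (hΨU : ∀ p ∈ W, Ψ p ∈ U)
    (hΨsmooth : ContDiffOn ℝ (⊤ : ℕ∞) Ψ W)
    (hΨinv : ∀ p ∈ W,
      ((fun i => (Ψ p i).re, fun i => (gradF (Ψ p) i).re) :
        (Fin n → ℝ) × (Fin n → ℝ)) = p) :
    ∀ j : Fin n, ∀ p ∈ W,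
      pdy (fun q => (F (Ψ q)).im) j p
        = ∑ k, pdy (fun q => (Ψ q k).im) j p * p.2 k := fun j p hp =>
  have hWp : W ∈ 𝓝 p := hW.mem_nhds hp
  dy_imF_general (hF _ (hΨU p hp)) ((hΨsmooth.contDiffAt hWp).differentiableAt (by simp))
    (fun k => Filter.eventually_of_mem hWp fun q hq =>
      congrFun (congrArg Prod.fst (hΨinv q hq)) k)
    (congrFun (congrArg Prod.snd (hΨinv p hp))) j
end

section
/- With the notation of the coordinate setup, define f : W → ℝ by f(x,y) = 2 Im F(Ψ(x,y)) − 2 Σ_{k=1}^n y_k u^k(x,y), and at a point p ∈ W let G be the 2n×2n Hessian matrix of f (in the coordinates (x¹,…,xⁿ,y₁,…,y_n)) and let H be the symmetric 2n×2n matrix with blocks H_{x^i x^j} = −(1/2) ∂u^i/∂y_j, H_{x^i y_j} = H_{y_j x^i} = (1/2) ∂u^i/∂x^j, and H_{y_i y_j} = (1/2) ∂v_i/∂x^j, all evaluated at p. Then H·G = I_{2n}, i.e. H is the inverse of the Hessian matrix of f at p. -/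
/-! Let `S = dΨ` and let `T = d(u, v)` be the differential of `(u, v) = (Im Ψ, Im ∇F ∘ Ψ)` in the
coordinates `(x, y)`. A tangent vector `X` is determined by the real parts of `(X, HF X)`, and
passing to `i X` replaces them by minus the imaginary parts; so `S` carries `-T` to multiplication
by `i`, and `T² = -1`. The imaginary part of `X ⬝ᵥ HF Y = Y ⬝ᵥ HF X` says that `J T` is symmetric,
where `J` is the standard symplectic matrix. In `df` the terms `y_k du^k` cancel, leaving
`df = 2 ∑ (v_k dx^k - u^k dy_k)`. Hence `H = -½ T J` and `G = -2 (J T)ᵀ = -2 J T`, and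
`H G = T J J T = -T² = 1`. -/

open Filter Matrix Topology

section ComplexVectors

variable {ι : Type*}

/-- The componentwise real part `ℂⁿ → ℝⁿ`, as a real-linear map. -/
noncomputable def rePart : (ι → ℂ) →L[ℝ] (ι → ℝ) :=
  .piMap fun _ => Complex.reCLM

/-- The componentwise imaginary part `ℂⁿ → ℝⁿ`, as a real-linear map. -/
noncomputable def imPart : (ι → ℂ) →L[ℝ] (ι → ℝ) :=
  .piMap fun _ => Complex.imCLM

@[simp] lemma rePart_apply (z : ι → ℂ) (i : ι) : rePart z i = (z i).re := rfl

@[simp] lemma imPart_apply (z : ι → ℂ) (i : ι) : imPart z i = (z i).im := rfl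

lemma rePart_I_smul (z : ι → ℂ) : rePart (Complex.I • z) = -imPart z := by
  ext i; simp

lemma imPart_I_smul (z : ι → ℂ) : imPart (Complex.I • z) = rePart z := by
  ext i; simp

lemma im_dotProduct [Fintype ι] (z w : ι → ℂ) :
    (z ⬝ᵥ w).im = rePart z ⬝ᵥ imPart w + imPart z ⬝ᵥ rePart w := by
  simp [dotProduct, Finset.sum_add_distrib]

lemma rePart_mulVec [Fintype ι] (A : Matrix ι ι ℂ) (z : ι → ℂ) :
    rePart (A *ᵥ z) =
      A.map Complex.re *ᵥ rePart z - A.map Complex.im *ᵥ imPart z := by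
  ext i; simp [mulVec, dotProduct]

end ComplexVectors

section SpecialCoordinates

variable {ι : Type*} {L : (ι → ℂ) →L[ℂ] (ι → ℂ)}

/-- The special real coordinates `Φ(z) = (Re z, Re g(z))`, where `g` plays the role of `∇F`. -/
noncomputable def reCoords (g : (ι → ℂ) → ι → ℂ) (z : ι → ℂ) : (ι → ℝ) × (ι → ℝ) :=
  (rePart z, rePart (g z))

/-- The conjugate special coordinates `(u, v) = (Im z, Im g(z))`, where `g` plays the role
of `∇F`. -/
noncomputable def imCoords (g : (ι → ℂ) → ι → ℂ) (z : ι → ℂ) : (ι → ℝ) × (ι → ℝ) :=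
  (imPart z, imPart (g z))

/-- The differential of `reCoords g` at a point where `g` has differential `L`. -/
noncomputable def reCoordsDeriv (L : (ι → ℂ) →L[ℂ] (ι → ℂ)) : (ι → ℂ) →L[ℝ] (ι → ℝ) × (ι → ℝ) :=
  rePart.prod (rePart ∘L L.restrictScalars ℝ)

/-- The differential of `imCoords g` at a point where `g` has differential `L`. -/
noncomputable def imCoordsDeriv (L : (ι → ℂ) →L[ℂ] (ι → ℂ)) : (ι → ℂ) →L[ℝ] (ι → ℝ) × (ι → ℝ) :=
  imPart.prod (imPart ∘L L.restrictScalars ℝ)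

lemma reCoordsDeriv_apply (X : ι → ℂ) : reCoordsDeriv L X = (rePart X, rePart (L X)) := rfl

lemma imCoordsDeriv_apply (X : ι → ℂ) : imCoordsDeriv L X = (imPart X, imPart (L X)) := rfl

lemma reCoordsDeriv_I_smul (X : ι → ℂ) :
    reCoordsDeriv L (Complex.I • X) = -imCoordsDeriv L X := by
  simp [reCoordsDeriv_apply, imCoordsDeriv_apply, rePart_I_smul]

lemma imCoordsDeriv_I_smul (X : ι → ℂ) :
    imCoordsDeriv L (Complex.I • X) = reCoordsDeriv L X := by
  simp [reCoordsDeriv_apply, imCoordsDeriv_apply, imPart_I_smul]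

lemma reCoordsDeriv_injective [Fintype ι] [DecidableEq ι] {A : Matrix ι ι ℂ}
    (hA : IsUnit (A.map Complex.im)) (hL : ∀ X, L X = A *ᵥ X) :
    Function.Injective (reCoordsDeriv L) := by
  refine (injective_iff_map_eq_zero _).2 fun X hX => ?_
  obtain ⟨hre, hLre⟩ := Prod.mk_eq_zero.1 hX
  have hmul : A.map Complex.im *ᵥ imPart X = A.map Complex.im *ᵥ 0 := by
    have hAre : rePart (A *ᵥ X) = 0 := hL X ▸ hLre
    rw [rePart_mulVec, show rePart X = 0 from hre] at hAre
    simpa only [mulVec_zero, zero_sub, neg_eq_zero] using hAre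
  have him := mulVec_injective_of_isUnit hA hmul
  ext i
  exact Complex.ext (congrFun hre i) (congrFun him i)

lemma imCoordsDeriv_comp_sq_eq_neg_id {S : (ι → ℝ) × (ι → ℝ) →L[ℝ] (ι → ℂ)}
    (hinj : Function.Injective (reCoordsDeriv L)) (hS : reCoordsDeriv L ∘L S = .id ℝ _) :
    (imCoordsDeriv L ∘L S) ∘L (imCoordsDeriv L ∘L S) = -.id ℝ _ := by
  have hre (w) : reCoordsDeriv L (S w) = w := DFunLike.congr_fun hS w
  have hI (w) : S (imCoordsDeriv L (S w)) = -(Complex.I • S w) := hinj <| by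
    rw [hre, map_neg, reCoordsDeriv_I_smul, neg_neg]
  refine ContinuousLinearMap.ext fun w => ?_
  simp [hI, imCoordsDeriv_I_smul, hre]

lemma dotProduct_imCoordsDeriv_comm [Fintype ι] {A : Matrix ι ι ℂ} (hA : A.IsSymm)
    (hL : ∀ X, L X = A *ᵥ X) {S : (ι → ℝ) × (ι → ℝ) →L[ℝ] (ι → ℂ)}
    (hS : reCoordsDeriv L ∘L S = .id ℝ _) (w w' : (ι → ℝ) × (ι → ℝ)) :
    w.1 ⬝ᵥ ((imCoordsDeriv L ∘L S) w').2 - w.2 ⬝ᵥ ((imCoordsDeriv L ∘L S) w').1 =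
      w'.1 ⬝ᵥ ((imCoordsDeriv L ∘L S) w).2 - w'.2 ⬝ᵥ ((imCoordsDeriv L ∘L S) w).1 := by
  have hre (w) : rePart (S w) = w.1 := congrArg Prod.fst (DFunLike.congr_fun hS w)
  have hLre (w) : rePart (L (S w)) = w.2 := congrArg Prod.snd (DFunLike.congr_fun hS w)
  have hcomm : S w ⬝ᵥ L (S w') = S w' ⬝ᵥ L (S w) := by
    rw [hL, hL, ← dotProduct_transpose_mulVec, hA.eq]
  have him := congrArg Complex.im hcomm
  rw [im_dotProduct, im_dotProduct, hre, hre, hLre, hLre, dotProduct_comm _ w.2,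
    dotProduct_comm _ w'.2] at him
  simp only [ContinuousLinearMap.comp_apply, imCoordsDeriv_apply]
  linarith

variable {g : (ι → ℂ) → ι → ℂ} {Ψ : (ι → ℝ) × (ι → ℝ) → ι → ℂ}
  {S : (ι → ℝ) × (ι → ℝ) →L[ℝ] (ι → ℂ)} {p : (ι → ℝ) × (ι → ℝ)}

lemma hasFDerivAt_reCoords [Finite ι] {z : ι → ℂ} (hg : HasFDerivAt g L z) :
    HasFDerivAt (reCoords g) (reCoordsDeriv L) z := by
  have := Fintype.ofFinite ι
  exact rePart.hasFDerivAt.prodMk (rePart.hasFDerivAt.comp z (hg.restrictScalars ℝ))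

lemma hasFDerivAt_imCoords [Finite ι] {z : ι → ℂ} (hg : HasFDerivAt g L z) :
    HasFDerivAt (imCoords g) (imCoordsDeriv L) z := by
  have := Fintype.ofFinite ι
  exact imPart.hasFDerivAt.prodMk (imPart.hasFDerivAt.comp z (hg.restrictScalars ℝ))

lemma reCoordsDeriv_comp_eq_id [Finite ι] (hg : HasFDerivAt g L (Ψ p))
    (hΨ : HasFDerivAt Ψ S p) (hinv : ∀ᶠ q in 𝓝 p, reCoords g (Ψ q) = q) :
    reCoordsDeriv L ∘L S = .id ℝ _ := by
  have := Fintype.ofFinite ι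
  have hid := (hasFDerivAt_id (𝕜 := ℝ) p).congr_of_eventuallyEq hinv
  exact ((hasFDerivAt_reCoords hg).comp p hΨ).unique hid

lemma fderiv_im_comp_sub_dotProduct [Fintype ι] {F : (ι → ℂ) → ℂ} {K : (ι → ℂ) →L[ℂ] ℂ}
    (hF : HasFDerivAt F K (Ψ p)) (hK : ∀ X, K X = g (Ψ p) ⬝ᵥ X)
    (hΨ : HasFDerivAt Ψ S p) (hinv : ∀ᶠ q in 𝓝 p, reCoords g (Ψ q) = q)
    (w : (ι → ℝ) × (ι → ℝ)) :
    fderiv ℝ (fun q => 2 * (F (Ψ q)).im - 2 * q.2 ⬝ᵥ imPart (Ψ q)) p w =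
      2 * ((imCoords g (Ψ p)).2 ⬝ᵥ w.1 - (imCoords g (Ψ p)).1 ⬝ᵥ w.2) := by
  have hx : (fun q => rePart (Ψ q)) =ᶠ[𝓝 p] Prod.fst :=
    hinv.mono fun _ hq => congrArg Prod.fst hq
  have hΨre : HasFDerivAt (fun q => rePart (Ψ q)) (rePart ∘L S) p :=
    rePart.hasFDerivAt.comp p hΨ
  have hre : rePart ∘L S = .fst ℝ _ _ :=
    hΨre.unique (hasFDerivAt_fst.congr_of_eventuallyEq hx)
  have hS : rePart (S w) = w.1 := DFunLike.congr_fun hre w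
  have hp : rePart (g (Ψ p)) = p.2 := congrArg Prod.snd hinv.self_of_nhds
  have hFim : HasFDerivAt (fun q => (F (Ψ q)).im) _ p :=
    Complex.imCLM.hasFDerivAt.comp p ((hF.restrictScalars ℝ).comp p hΨ)
  have hy : HasFDerivAt (𝕜 := ℝ) (fun q : (ι → ℝ) × (ι → ℝ) => q.2) _ p := hasFDerivAt_snd
  have hu : HasFDerivAt (fun q => imPart (Ψ q)) _ p := imPart.hasFDerivAt.comp p hΨ
  have hyu : HasFDerivAt (fun q => q.2 ⬝ᵥ imPart (Ψ q)) _ p :=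
    .fun_sum fun k _ => (hasFDerivAt_pi'.1 hy k).mul (hasFDerivAt_pi'.1 hu k)
  have hdyu : fderiv ℝ (fun q => q.2 ⬝ᵥ imPart (Ψ q)) p w =
      p.2 ⬝ᵥ imPart (S w) + imPart (Ψ p) ⬝ᵥ w.2 := by
    rw [hyu.fderiv]
    simp [dotProduct, Finset.sum_add_distrib]
  have hdF : fderiv ℝ (fun q => (F (Ψ q)).im) p w =
      p.2 ⬝ᵥ imPart (S w) + imPart (g (Ψ p)) ⬝ᵥ w.1 := by
    rw [hFim.fderiv]
    calc (K (S w)).im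
        = rePart (g (Ψ p)) ⬝ᵥ imPart (S w) + imPart (g (Ψ p)) ⬝ᵥ rePart (S w) := by
          rw [hK, im_dotProduct]
      _ = p.2 ⬝ᵥ imPart (S w) + imPart (g (Ψ p)) ⬝ᵥ w.1 := by rw [hS, hp]
  rw [fderiv_fun_sub (hFim.const_mul 2).differentiableAt (hyu.const_mul 2).differentiableAt,
    fderiv_const_mul hFim.differentiableAt, fderiv_const_mul hyu.differentiableAt]
  simp only [_root_.sub_apply, _root_.smul_apply, smul_eq_mul, hdyu, hdF, imCoords]
  ring

end SpecialCoordinates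

section CoordMatrix

variable {ι : Type*} [Fintype ι] [DecidableEq ι]

/-- The matrix of an endomorphism of `ℝⁿ × ℝⁿ` in the coordinates `(x, y)`. -/
noncomputable def coordMatrix (T : (ι → ℝ) × (ι → ℝ) →L[ℝ] (ι → ℝ) × (ι → ℝ)) :
    Matrix (ι ⊕ ι) (ι ⊕ ι) ℝ :=
  LinearMap.toMatrix ((Pi.basisFun ℝ ι).prod (Pi.basisFun ℝ ι))
    ((Pi.basisFun ℝ ι).prod (Pi.basisFun ℝ ι)) T

variable {T : (ι → ℝ) × (ι → ℝ) →L[ℝ] (ι → ℝ) × (ι → ℝ)}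

lemma coordMatrix_eq_fromBlocks :
    coordMatrix T =
      fromBlocks (.of fun i j => (T (Pi.single j 1, 0)).1 i)
        (.of fun i j => (T (0, Pi.single j 1)).1 i)
        (.of fun i j => (T (Pi.single j 1, 0)).2 i)
        (.of fun i j => (T (0, Pi.single j 1)).2 i) := by
  ext (i | i) (j | j) <;> simp [coordMatrix, LinearMap.toMatrix_apply]

lemma coordMatrix_mul_self_eq_neg_one (hT : T ∘L T = -.id ℝ _) :
    coordMatrix T * coordMatrix T = -1 := by
  rw [coordMatrix, ← LinearMap.toMatrix_comp, ← ContinuousLinearMap.toLinearMap_comp, hT]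
  simp

lemma isSymm_J_mul_coordMatrix
    (hT : ∀ w w', w.1 ⬝ᵥ (T w').2 - w.2 ⬝ᵥ (T w').1 = w'.1 ⬝ᵥ (T w).2 - w'.2 ⬝ᵥ (T w).1) :
    (J ι ℝ * coordMatrix T).IsSymm := by
  rw [coordMatrix_eq_fromBlocks, J, fromBlocks_multiply]
  ext (i | i) (j | j)
  · simpa using hT (Pi.single j 1, 0) (Pi.single i 1, 0)
  · simpa [eq_neg_iff_add_eq_zero, neg_eq_iff_add_eq_zero] using
      hT (0, Pi.single j 1) (Pi.single i 1, 0)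
  · simpa [neg_eq_iff_eq_neg] using hT (Pi.single j 1, 0) (0, Pi.single i 1)
  · simpa using hT (0, Pi.single j 1) (0, Pi.single i 1)

end CoordMatrix

section HessianMatrix

variable {n : ℕ}

/-- The matrix `H` of the inverse special Kähler metric attached to conjugate coordinates
`κ = (u, v)` on `ℝⁿ × ℝⁿ`. -/
noncomputable def inverseMetric (κ : (Fin n → ℝ) × (Fin n → ℝ) → (Fin n → ℝ) × (Fin n → ℝ))
    (p : (Fin n → ℝ) × (Fin n → ℝ)) : Matrix (Fin n ⊕ Fin n) (Fin n ⊕ Fin n) ℝ :=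
  fromBlocks (.of fun i j => -(1/2) * pdy (fun q => (κ q).1 i) j p)
    (.of fun i j => (1/2) * pdx (fun q => (κ q).1 i) j p)
    (.of fun i j => (1/2) * pdx (fun q => (κ q).1 j) i p)
    (.of fun i j => (1/2) * pdx (fun q => (κ q).2 i) j p)

/-- The matrix `G` of iterated partial derivatives of `f` in the coordinates of `ℝⁿ × ℝⁿ`; the
row index is the outer derivative. -/
noncomputable def coordHessian (f : (Fin n → ℝ) × (Fin n → ℝ) → ℝ)
    (p : (Fin n → ℝ) × (Fin n → ℝ)) : Matrix (Fin n ⊕ Fin n) (Fin n ⊕ Fin n) ℝ :=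
  .of fun a b =>
    Sum.elim
      (fun i => pdx (fun q => Sum.elim (fun j => pdx f j q) (fun j => pdy f j q) b) i p)
      (fun i => pdy (fun q => Sum.elim (fun j => pdx f j q) (fun j => pdy f j q) b) i p) a

lemma pdx_eq_mul_of_eventuallyEq {g k : (Fin n → ℝ) × (Fin n → ℝ) → ℝ} {c : ℝ}
    {p : (Fin n → ℝ) × (Fin n → ℝ)} (h : g =ᶠ[𝓝 p] fun q => c * k q) (i : Fin n) :
    pdx g i p = c * pdx k i p :=
  DFunLike.congr_fun (h.fderiv_eq.trans (congrFun (fderiv_const_smul_field (f := k) c) p)) _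

lemma pdy_eq_mul_of_eventuallyEq {g k : (Fin n → ℝ) × (Fin n → ℝ) → ℝ} {c : ℝ}
    {p : (Fin n → ℝ) × (Fin n → ℝ)} (h : g =ᶠ[𝓝 p] fun q => c * k q) (i : Fin n) :
    pdy g i p = c * pdy k i p :=
  DFunLike.congr_fun (h.fderiv_eq.trans (congrFun (fderiv_const_smul_field (f := k) c) p)) _

variable {κ : (Fin n → ℝ) × (Fin n → ℝ) → (Fin n → ℝ) × (Fin n → ℝ)}
  {T : (Fin n → ℝ) × (Fin n → ℝ) →L[ℝ] (Fin n → ℝ) × (Fin n → ℝ)}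
  {f : (Fin n → ℝ) × (Fin n → ℝ) → ℝ} {p : (Fin n → ℝ) × (Fin n → ℝ)}

lemma coordMatrix_eq_jacobian (hκ : HasFDerivAt κ T p) :
    coordMatrix T =
      fromBlocks (.of fun i j => pdx (fun q => (κ q).1 i) j p)
        (.of fun i j => pdy (fun q => (κ q).1 i) j p)
        (.of fun i j => pdx (fun q => (κ q).2 i) j p)
        (.of fun i j => pdy (fun q => (κ q).2 i) j p) := by
  have h₁ (i : Fin n) := (hasFDerivAt_pi'.1 hκ.fst i).fderiv
  have h₂ (i : Fin n) := (hasFDerivAt_pi'.1 hκ.snd i).fderiv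
  rw [coordMatrix_eq_fromBlocks]
  simp [pdx, pdy, h₁, h₂]

lemma inverseMetric_eq_smul (hκ : HasFDerivAt κ T p) (hT : (J (Fin n) ℝ * coordMatrix T).IsSymm) :
    inverseMetric κ p = (-(1 / 2) : ℝ) • (coordMatrix T * J (Fin n) ℝ) := by
  have hvy (i j : Fin n) : pdx (fun q => (κ q).1 j) i p = -pdy (fun q => (κ q).2 i) j p := by
    simpa [coordMatrix_eq_jacobian hκ, J, fromBlocks_multiply] using
      hT.apply (.inl i) (.inr j)
  ext (i | i) (j | j) <;>
    simp [inverseMetric, coordMatrix_eq_jacobian hκ, J, fromBlocks_multiply, hvy]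

lemma coordHessian_eq_smul (hκ : HasFDerivAt κ T p)
    (hf : ∀ᶠ q in 𝓝 p, ∀ w, fderiv ℝ f q w = 2 * ((κ q).2 ⬝ᵥ w.1 - (κ q).1 ⬝ᵥ w.2)) :
    coordHessian f p = (-2 : ℝ) • (J (Fin n) ℝ * coordMatrix T)ᵀ := by
  have hx (j : Fin n) : pdx f j =ᶠ[𝓝 p] fun q => 2 * (κ q).2 j := by
    filter_upwards [hf] with q hq
    simp [pdx, hq]
  have hy (j : Fin n) : pdy f j =ᶠ[𝓝 p] fun q => -2 * (κ q).1 j := by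
    filter_upwards [hf] with q hq
    simp [pdy, hq]
  rw [coordMatrix_eq_jacobian hκ, J, fromBlocks_multiply]
  ext (i | i) (j | j) <;>
    simp [coordHessian, pdx_eq_mul_of_eventuallyEq (hx j), pdx_eq_mul_of_eventuallyEq (hy j),
      pdy_eq_mul_of_eventuallyEq (hx j), pdy_eq_mul_of_eventuallyEq (hy j)]

theorem inverseMetric_mul_coordHessian (hκ : HasFDerivAt κ T p) (hTT : T ∘L T = -.id ℝ _)
    (hT : ∀ w w', w.1 ⬝ᵥ (T w').2 - w.2 ⬝ᵥ (T w').1 = w'.1 ⬝ᵥ (T w).2 - w'.2 ⬝ᵥ (T w).1)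
    (hf : ∀ᶠ q in 𝓝 p, ∀ w, fderiv ℝ f q w = 2 * ((κ q).2 ⬝ᵥ w.1 - (κ q).1 ⬝ᵥ w.2)) :
    inverseMetric κ p * coordHessian f p = 1 := by
  have hsymm := isSymm_J_mul_coordMatrix hT
  have hJJ : J (Fin n) ℝ * (J (Fin n) ℝ * coordMatrix T) = -coordMatrix T := by
    rw [← Matrix.mul_assoc, J_squared, neg_one_mul]
  rw [inverseMetric_eq_smul hκ hsymm, coordHessian_eq_smul hκ hf, hsymm.eq,
    smul_mul_smul_comm, Matrix.mul_assoc, hJJ, Matrix.mul_neg, coordMatrix_mul_self_eq_neg_one hTT]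
  norm_num

end HessianMatrix

/-- with `f = 2 Im F ∘ Ψ − 2 ∑_k y_k u^k`, the matrix `H` with blocks `H_{x^i x^j} = −(1/2) ∂u^i/∂y_j`, `H_{x^i y_j} = H_{y_j x^i} = (1/2) ∂u^i/∂x^j`, `H_{y_i y_j} = (1/2) ∂v_i/∂x^j` is the inverse of the coordinate Hessian matrix `G` of `f`: `H · G = 1`. -/
theorem inverse_hessian_of_f
    {n : ℕ} (hn : 1 ≤ n) (U : Set (Fin n → ℂ)) (hU : IsOpen U)
    (F : (Fin n → ℂ) → ℂ) (gradF : (Fin n → ℂ) → (Fin n → ℂ))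
    (hessF : (Fin n → ℂ) → Matrix (Fin n) (Fin n) ℂ)
    (hF : ∀ z ∈ U, ∃ L : (Fin n → ℂ) →L[ℂ] ℂ,
      HasFDerivAt F L z ∧ ∀ X, L X = ∑ k, gradF z k * X k)
    (hgrad : ∀ z ∈ U, ∃ L : (Fin n → ℂ) →L[ℂ] (Fin n → ℂ),
      HasFDerivAt gradF L z ∧ ∀ X, L X = (hessF z).mulVec X)
    (hsymm : ∀ z ∈ U, (hessF z).IsSymm)
    (hnondeg : ∀ z ∈ U, IsUnit ((hessF z).map Complex.im))
    (W : Set ((Fin n → ℝ) × (Fin n → ℝ))) (hW : IsOpen W)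
    (Ψ : (Fin n → ℝ) × (Fin n → ℝ) → (Fin n → ℂ))
    (hΨU : ∀ p ∈ W, Ψ p ∈ U)
    (hΨsmooth : ContDiffOn ℝ (⊤ : ℕ∞) Ψ W)
    (hΨinv : ∀ p ∈ W,
      ((fun i => (Ψ p i).re, fun i => (gradF (Ψ p) i).re) :
        (Fin n → ℝ) × (Fin n → ℝ)) = p)
    (f : (Fin n → ℝ) × (Fin n → ℝ) → ℝ)
    (hf : ∀ q, f q = 2 * (F (Ψ q)).im - 2 * ∑ k, q.2 k * (Ψ q k).im) :
    ∀ p ∈ W,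
      (Matrix.of fun a b : Fin n ⊕ Fin n =>
          match a, b with
          | Sum.inl i, Sum.inl j => -(1/2) * pdy (fun q => (Ψ q i).im) j p
          | Sum.inl i, Sum.inr j => (1/2) * pdx (fun q => (Ψ q i).im) j p
          | Sum.inr i, Sum.inl j => (1/2) * pdx (fun q => (Ψ q j).im) i p
          | Sum.inr i, Sum.inr j => (1/2) * pdx (fun q => (gradF (Ψ q) i).im) j p) *
        (Matrix.of fun a b : Fin n ⊕ Fin n =>
          Sum.elim (fun i => pdx (fun q => Sum.elim (fun j => pdx f j q) (fun j => pdy f j q) b) i p)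
                   (fun i => pdy (fun q => Sum.elim (fun j => pdx f j q) (fun j => pdy f j q) b) i p) a)
      = (1 : Matrix (Fin n ⊕ Fin n) (Fin n ⊕ Fin n) ℝ) := by
  intro p hp
  have hΨ : ∀ q ∈ W, HasFDerivAt Ψ (fderiv ℝ Ψ q) q := fun q hq =>
    ((hΨsmooth.contDiffAt (hW.mem_nhds hq)).differentiableAt (by simp)).hasFDerivAt
  have hinv : ∀ q ∈ W, ∀ᶠ r in 𝓝 q, reCoords gradF (Ψ r) = r := fun q hq =>
    eventually_of_mem (hW.mem_nhds hq) hΨinv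
  have hdf : ∀ q ∈ W, ∀ w, fderiv ℝ f q w =
      2 * ((imCoords gradF (Ψ q)).2 ⬝ᵥ w.1 - (imCoords gradF (Ψ q)).1 ⬝ᵥ w.2) := by
    intro q hq w
    obtain ⟨K, hK, hKgrad⟩ := hF _ (hΨU q hq)
    rw [funext hf]
    exact fderiv_im_comp_sub_dotProduct hK hKgrad (hΨ q hq) (hinv q hq) w
  obtain ⟨L, hL, hLhess⟩ := hgrad _ (hΨU p hp)
  have hS := reCoordsDeriv_comp_eq_id hL (hΨ p hp) (hinv p hp)
  have hinj := reCoordsDeriv_injective (hnondeg _ (hΨU p hp)) hLhess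
  refine Eq.trans ?_ (inverseMetric_mul_coordHessian (f := f)
    ((hasFDerivAt_imCoords hL).comp p (hΨ p hp)) (imCoordsDeriv_comp_sq_eq_neg_id hinj hS)
    (dotProduct_imCoordsDeriv_comm (hsymm _ (hΨU p hp)) hLhess hS)
    (eventually_of_mem (hW.mem_nhds hp) hdf))
  congr 1
  ext (i | i) (j | j) <;> rfl
end
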